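/- arXiv:2204.00374 — 2 statements merged into one kernel-verified Lean document; each statement's English description precedes it below -/
import Mathlib

section
/- Let d_A, d_B ≥ 1, let ρ be a positive semidefinite complex matrix on ℂ^{d_A} ⊗ ℂ^{d_B} with trace 1, and let ψ ∈ ℂ^{d_A} and φ ∈ ℂ^{d_B} be unit vectors. Define F_A := ⟨ψ, (Tr_B ρ) ψ⟩, F_B := ⟨φ, (Tr_A ρ) φ⟩, and F_AB := ⟨ψ ⊗ φ, ρ (ψ ⊗ φ)⟩, where Tr_B and Tr_A denote the partial traces over the second and first tensor factor respectively. Then F_A + F_B ≤ 1 + F_AB. -/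
open Matrix BigOperators
open scoped ComplexOrder

/-- Partial trace over the second tensor factor. -/
noncomputable def ptraceB {dA dB : ℕ} (ρ : Matrix (Fin dA × Fin dB) (Fin dA × Fin dB) ℂ) :
    Matrix (Fin dA) (Fin dA) ℂ :=
  fun i i' => ∑ j, ρ (i, j) (i', j)

/-- Partial trace over the first tensor factor. -/
noncomputable def ptraceA {dA dB : ℕ} (ρ : Matrix (Fin dA × Fin dB) (Fin dA × Fin dB) ℂ) :
    Matrix (Fin dB) (Fin dB) ℂ :=
  fun j j' => ∑ i, ρ (i, j) (i, j')

lemma proj_compl_aux {n : ℕ} (v : Fin n → ℂ) (hv : star v ⬝ᵥ v = 1) :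
    (1 - vecMulVec v (star v))ᴴ * (1 - vecMulVec v (star v)) = 1 - vecMulVec v (star v) := by
  have h1 : (vecMulVec v (star v))ᴴ = vecMulVec v (star v) := by
    rw [conjTranspose_vecMulVec, star_star]
  have h2 : vecMulVec v (star v) * vecMulVec v (star v) = vecMulVec v (star v) := by
    rw [vecMulVec_mul_vecMulVec, hv, one_smul]
  rw [conjTranspose_sub, conjTranspose_one, h1, sub_mul, mul_sub, mul_sub, h2]
  simp

lemma trA_aux {dA dB : ℕ} (ρ : Matrix (Fin dA × Fin dB) (Fin dA × Fin dB) ℂ)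
    (ψ : Fin dA → ℂ) :
    (ρ * kroneckerMap (· * ·) (vecMulVec ψ (star ψ)) (1 : Matrix (Fin dB) (Fin dB) ℂ)).trace
      = star ψ ⬝ᵥ (ptraceB ρ).mulVec ψ := by
  simp only [Matrix.trace, Matrix.diag, Matrix.mul_apply, kroneckerMap_apply, vecMulVec_apply,
    dotProduct, mulVec, ptraceB, Fintype.sum_prod_type, Matrix.one_apply, Finset.mul_sum,
    Finset.sum_mul, Pi.star_apply]
  simp only [mul_ite, mul_one, mul_zero, Finset.sum_ite_eq', Finset.mem_univ, if_true]
  refine Finset.sum_congr rfl fun i _ => ?_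
  rw [Finset.sum_comm]
  refine Finset.sum_congr rfl fun j _ => Finset.sum_congr rfl fun k _ => ?_
  ring

lemma trB_aux {dA dB : ℕ} (ρ : Matrix (Fin dA × Fin dB) (Fin dA × Fin dB) ℂ)
    (φ : Fin dB → ℂ) :
    (ρ * kroneckerMap (· * ·) (1 : Matrix (Fin dA) (Fin dA) ℂ) (vecMulVec φ (star φ))).trace
      = star φ ⬝ᵥ (ptraceA ρ).mulVec φ := by
  simp only [Matrix.trace, Matrix.diag, Matrix.mul_apply, kroneckerMap_apply, vecMulVec_apply,
    dotProduct, mulVec, ptraceA, Fintype.sum_prod_type, Matrix.one_apply, Finset.mul_sum,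
    Finset.sum_mul, Pi.star_apply]
  simp only [ite_mul, one_mul, zero_mul, mul_ite, mul_zero, Finset.sum_ite_irrel,
    Finset.sum_const_zero, Finset.sum_ite_eq', Finset.mem_univ, if_true]
  rw [Finset.sum_comm]
  refine Finset.sum_congr rfl fun i _ => ?_
  rw [Finset.sum_comm]
  refine Finset.sum_congr rfl fun j _ => Finset.sum_congr rfl fun k _ => ?_
  ring

lemma trAB_aux {dA dB : ℕ} (ρ : Matrix (Fin dA × Fin dB) (Fin dA × Fin dB) ℂ)
    (ψ : Fin dA → ℂ) (φ : Fin dB → ℂ) :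
    (ρ * kroneckerMap (· * ·) (vecMulVec ψ (star ψ)) (vecMulVec φ (star φ))).trace
      = star (fun p : Fin dA × Fin dB => ψ p.1 * φ p.2) ⬝ᵥ
          ρ.mulVec (fun p : Fin dA × Fin dB => ψ p.1 * φ p.2) := by
  simp only [Matrix.trace, Matrix.diag, Matrix.mul_apply, kroneckerMap_apply, vecMulVec_apply,
    dotProduct, mulVec, Finset.mul_sum, Pi.star_apply, star_mul]
  refine Finset.sum_congr rfl fun j _ => Finset.sum_congr rfl fun k _ => ?_
  ring

theorem fidelity_tradeoff (dA dB : ℕ) (hdA : 1 ≤ dA) (hdB : 1 ≤ dB)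
    (ρ : Matrix (Fin dA × Fin dB) (Fin dA × Fin dB) ℂ)
    (hρ : ρ.PosSemidef) (htr : ρ.trace = 1)
    (ψ : Fin dA → ℂ) (φ : Fin dB → ℂ)
    (hψ : star ψ ⬝ᵥ ψ = 1) (hφ : star φ ⬝ᵥ φ = 1) :
    (star ψ ⬝ᵥ (ptraceB ρ).mulVec ψ).re + (star φ ⬝ᵥ (ptraceA ρ).mulVec φ).re
      ≤ 1 + (star (fun p : Fin dA × Fin dB => ψ p.1 * φ p.2) ⬝ᵥ
          ρ.mulVec (fun p : Fin dA × Fin dB => ψ p.1 * φ p.2)).re := by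
  set P := vecMulVec ψ (star ψ) with hP
  set Q := vecMulVec φ (star φ) with hQ
  have hK : (kroneckerMap (· * ·) (1 - P) (1 - Q))ᴴ * kroneckerMap (· * ·) (1 - P) (1 - Q)
      = kroneckerMap (· * ·) (1 - P) (1 - Q) := by
    rw [conjTranspose_kronecker, ← mul_kronecker_mul, proj_compl_aux ψ hψ, proj_compl_aux φ hφ]
  have h0 := (hρ.mul_mul_conjTranspose_same
    (kroneckerMap (· * ·) (1 - P) (1 - Q))).trace_nonneg
  rw [Matrix.mul_assoc, Matrix.trace_mul_comm, Matrix.mul_assoc, hK] at h0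
  have hexp : kroneckerMap (· * ·) (1 - P) (1 - Q)
      = 1 - kroneckerMap (· * ·) P (1 : Matrix (Fin dB) (Fin dB) ℂ)
        - kroneckerMap (· * ·) (1 : Matrix (Fin dA) (Fin dA) ℂ) Q
        + kroneckerMap (· * ·) P Q := by
    rw [← one_kronecker_one (α := ℂ) (m := Fin dA) (n := Fin dB)]
    ext ⟨i, j⟩ ⟨k, l⟩
    simp only [kroneckerMap_apply, Matrix.sub_apply, Matrix.add_apply]
    ring
  rw [hexp, mul_add, mul_sub, mul_sub, mul_one, trace_add, trace_sub, trace_sub, htr,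
    trA_aux, trB_aux, trAB_aux] at h0
  have h1 := (Complex.le_def.mp h0).1
  simp only [Complex.add_re, Complex.sub_re, Complex.one_re, Complex.zero_re] at h1
  linarith
end

section
/- Let U be any unitary on ℂ² ⊗ ℂ² and let U^o be its reshuffled 4×4 matrix. Write P := U^o U^{o†} in 2×2 blocks with respect to the first tensor factor, P = [[A, B†], [B, C]] (so A_{m,m'} = P_{(0,m),(0,m')}, B_{m,m'} = P_{(1,m),(0,m')}, C_{m,m'} = P_{(1,m),(1,m')}). Then Tr A = 2, Tr B = 0, and C = 2·I₂ − A = (Tr A)·I₂ − A, i.e., the lower-right block is the adjugate of the upper-left block. -/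
open Matrix BigOperators
open scoped ComplexOrder

/-- The reshuffled ((π/2)-rotated) operator `U^o` of a bipartite matrix `U`,
with entries `(U^o)_{(i,j),(k,l)} = U^{ki}_{lj} = U (k,i) (l,j)`. -/
noncomputable def reshuffle {dA dB : ℕ}
    (U : Matrix (Fin dA × Fin dB) (Fin dA × Fin dB) ℂ) :
    Matrix (Fin dB × Fin dB) (Fin dA × Fin dA) ℂ :=
  fun p q => U (q.1, p.1) (q.2, p.2)

theorem two_qubit_block_structure
    (U : Matrix (Fin 2 × Fin 2) (Fin 2 × Fin 2) ℂ)
    (hU : U ∈ Matrix.unitaryGroup (Fin 2 × Fin 2) ℂ) :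
    -- `P = U^o U^{o†}`, written in 2×2 blocks w.r.t. the first tensor factor
    let P : Matrix (Fin 2 × Fin 2) (Fin 2 × Fin 2) ℂ := reshuffle U * (reshuffle U)ᴴ
    let A : Matrix (Fin 2) (Fin 2) ℂ := fun m m' => P (0, m) (0, m')
    let B : Matrix (Fin 2) (Fin 2) ℂ := fun m m' => P (1, m) (0, m')
    let C : Matrix (Fin 2) (Fin 2) ℂ := fun m m' => P (1, m) (1, m')
    A.trace = 2 ∧ B.trace = 0
    ∧ C = (2 : ℂ) • (1 : Matrix (Fin 2) (Fin 2) ℂ) - A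
    ∧ C = A.trace • (1 : Matrix (Fin 2) (Fin 2) ℂ) - A
    ∧ C = A.adjugate := by
  intro P A B C
  have hrow : ∀ p q, (U * star U) p q = (1 : Matrix (Fin 2 × Fin 2) (Fin 2 × Fin 2) ℂ) p q := by
    intro p q
    rw [Matrix.mem_unitaryGroup_iff.mp hU]
  have hcol : ∀ p q, (star U * U) p q = (1 : Matrix (Fin 2 × Fin 2) (Fin 2 × Fin 2) ℂ) p q := by
    intro p q
    rw [Matrix.mem_unitaryGroup_iff'.mp hU]
  simp only [Matrix.mul_apply, Matrix.star_apply, Fintype.sum_prod_type, Fin.sum_univ_two,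
    Matrix.one_apply] at hrow hcol
  have hA : A.trace = 2 := by
    have h0 := hrow (0, 0) (0, 0)
    have h1 := hrow (1, 0) (1, 0)
    simp only [if_true] at h0 h1
    simp only [A, P, Matrix.trace, Matrix.diag, reshuffle, Matrix.mul_apply,
      Matrix.conjTranspose_apply, Fintype.sum_prod_type, Fin.sum_univ_two]
    linear_combination h0 + h1
  have hB : B.trace = 0 := by
    have h0 := hrow (0, 1) (0, 0)
    have h1 := hrow (1, 1) (1, 0)
    simp only [Prod.mk.injEq, one_ne_zero, and_false, if_false] at h0 h1
    simp only [B, P, Matrix.trace, Matrix.diag, reshuffle, Matrix.mul_apply,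
      Matrix.conjTranspose_apply, Fintype.sum_prod_type, Fin.sum_univ_two]
    linear_combination h0 + h1
  have hC : C = (2 : ℂ) • (1 : Matrix (Fin 2) (Fin 2) ℂ) - A := by
    ext m m'
    have h0 := hcol (0, m') (0, m)
    have h1 := hcol (1, m') (1, m)
    simp only [Prod.mk.injEq, true_and] at h0 h1
    rw [Matrix.sub_apply, Matrix.smul_apply, Matrix.one_apply, smul_eq_mul]
    simp only [eq_comm (a := m) (b := m'), A, C, P, reshuffle, Matrix.mul_apply,
      Matrix.conjTranspose_apply, Fintype.sum_prod_type, Fin.sum_univ_two]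
    linear_combination h0 + h1
  refine ⟨hA, hB, hC, by rw [hA]; exact hC, ?_⟩
  have hadj : A.adjugate = A.trace • (1 : Matrix (Fin 2) (Fin 2) ℂ) - A := by
    rw [Matrix.adjugate_fin_two, Matrix.trace_fin_two]
    ext i j
    fin_cases i <;> fin_cases j <;> simp
  rw [hadj, hA]
  exact hC
end
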